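/- Let G be a group, K a normal subgroup of G, and ρ̃ : K → CircleDeg1Liftˣ a group homomorphism. Suppose g ∈ G is lift-compatible for ρ̃, i.e. there exists L ∈ CircleDeg1Liftˣ such that for every x ∈ K there is an integer n with ρ̃(g⁻¹xg) = L⁻¹ · ρ̃(x) · L · translate(n)⁻¹. Then for all x, y ∈ K: τ(ρ̃(xy)) − τ(ρ̃(g⁻¹(xy)g)) = (τ(ρ̃(x)) − τ(ρ̃(g⁻¹xg))) + (τ(ρ̃(y)) − τ(ρ̃(g⁻¹yg))). (Second half of Lemma 3.1: the map k'_{ρ̃}(g) : K → ℤ is a homomorphism.) -/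

import Mathlib

/-- The translation `x ↦ x + a` as an element of `CircleDeg1Liftˣ`. -/
noncomputable def translateU (a : ℝ) : CircleDeg1Liftˣ :=
  CircleDeg1Lift.translate (Multiplicative.ofAdd a)

/-- The Poincaré translation number of an invertible degree-one lift. -/
noncomputable def tn (u : CircleDeg1Liftˣ) : ℝ :=
  CircleDeg1Lift.translationNumber (u : CircleDeg1Lift)

/-!
Integer translations are central in `CircleDeg1Liftˣ`, and `tn` is additive on commuting pairs.
Hence if `σ` is conjugate to `ρ` up to integer translations, `tn (ρ x) - tn (σ x)` is exactly the
integer `n` of the correction `(translateU n)⁻¹` at `x`. In a product `σ x * σ y` the central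
corrections collect on the right, so these integers add. The theorem is the case where `σ` is `ρ`
precomposed with conjugation by `g⁻¹`.
-/

theorem translateU_add (a b : ℝ) : translateU (a + b) = translateU a * translateU b :=
  map_mul CircleDeg1Lift.translate (Multiplicative.ofAdd a) (Multiplicative.ofAdd b)

theorem commute_translateU_intCast (n : ℤ) (u : CircleDeg1Liftˣ) : Commute (translateU n) u :=
  Units.ext <| CircleDeg1Lift.ext fun x ↦ ((u : CircleDeg1Lift).map_int_add n x).symm

theorem tn_translateU (a : ℝ) : tn (translateU a) = a :=
  CircleDeg1Lift.translationNumber_translate a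

theorem tn_inv (u : CircleDeg1Liftˣ) : tn u⁻¹ = -tn u :=
  CircleDeg1Lift.translationNumber_units_inv u

theorem tn_conj (L u : CircleDeg1Liftˣ) : tn (L⁻¹ * u * L) = tn u :=
  CircleDeg1Lift.translationNumber_conj_eq' L u

theorem tn_mul_of_commute {u v : CircleDeg1Liftˣ} (h : Commute u v) : tn (u * v) = tn u + tn v :=
  CircleDeg1Lift.translationNumber_mul_of_commute h.units_val

theorem tn_conj_mul_translateU_inv (L u : CircleDeg1Liftˣ) (n : ℤ) :
    tn (L⁻¹ * u * L * (translateU n)⁻¹) = tn u - n := by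
  have hcomm : Commute (L⁻¹ * u * L) (translateU n)⁻¹ :=
    (commute_translateU_intCast n _).symm.inv_right
  rw [tn_mul_of_commute hcomm, tn_conj, tn_inv, tn_translateU, sub_eq_add_neg]

theorem conj_mul_translateU_inv_mul (L u v : CircleDeg1Liftˣ) (m n : ℤ) :
    L⁻¹ * u * L * (translateU m)⁻¹ * (L⁻¹ * v * L * (translateU n)⁻¹) =
      L⁻¹ * (u * v) * L * (translateU (m + n : ℤ))⁻¹ := by
  have hcomm : Commute (translateU m)⁻¹ (L⁻¹ * v * L) :=
    (commute_translateU_intCast m _).inv_left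
  have hconj : L⁻¹ * u * L * (L⁻¹ * v * L) = L⁻¹ * (u * v) * L := by group
  have htranslate : (translateU m)⁻¹ * (translateU n)⁻¹ = (translateU (m + n : ℤ))⁻¹ := by
    rw [← mul_inv_rev, ← translateU_add, Int.cast_add, add_comm]
  rw [hcomm.mul_mul_mul_comm, hconj, htranslate]

theorem stmt_2_general {M : Type*} [MulOneClass M] (ρ σ : M →* CircleDeg1Liftˣ)
    (hρσ : ∃ L : CircleDeg1Liftˣ, ∀ x : M, ∃ n : ℤ,
      σ x = L⁻¹ * ρ x * L * (translateU n)⁻¹) (x y : M) :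
    tn (ρ (x * y)) - tn (σ (x * y)) = (tn (ρ x) - tn (σ x)) + (tn (ρ y) - tn (σ y)) := by
  obtain ⟨L, hL⟩ := hρσ
  obtain ⟨m, hm⟩ := hL x
  obtain ⟨n, hn⟩ := hL y
  have hmn : σ (x * y) = L⁻¹ * ρ (x * y) * L * (translateU (m + n : ℤ))⁻¹ := by
    rw [map_mul, map_mul, hm, hn, conj_mul_translateU_inv_mul]
  rw [hmn, hm, hn, tn_conj_mul_translateU_inv, tn_conj_mul_translateU_inv,
    tn_conj_mul_translateU_inv]
  push_cast
  ring

theorem comp_conjNormal_symm_apply {G N : Type*} [Group G] [MulOneClass N] {K : Subgroup G}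
    [hK : K.Normal] (ρ : K →* N) (g : G) (x : K) :
    ρ.comp (MulAut.conjNormal g).symm.toMonoidHom x =
      ρ ⟨g⁻¹ * x * g, hK.conj_mem' x x.2 g⟩ :=
  congrArg ρ <| Subtype.ext <| MulAut.conjNormal_symm_apply g x

theorem stmt_2 {G : Type*} [Group G] (K : Subgroup G) (hK : K.Normal)
    (ρ : K →* CircleDeg1Liftˣ) (g : G)
    (hg : ∃ L : CircleDeg1Liftˣ, ∀ x : K, ∃ n : ℤ,
      ρ ⟨g⁻¹ * x * g, hK.conj_mem' x x.2 g⟩ = L⁻¹ * ρ x * L * (translateU n)⁻¹) :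
    ∀ x y : K,
      tn (ρ (x * y)) - tn (ρ ⟨g⁻¹ * ↑(x * y) * g, hK.conj_mem' (x * y) (x * y).2 g⟩) =
        (tn (ρ x) - tn (ρ ⟨g⁻¹ * x * g, hK.conj_mem' x x.2 g⟩)) +
        (tn (ρ y) - tn (ρ ⟨g⁻¹ * y * g, hK.conj_mem' y y.2 g⟩)) := by
  simp only [← comp_conjNormal_symm_apply] at hg ⊢
  exact stmt_2_general ρ _ hg
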